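/- If G is a connected claw-free finite simple graph of order n ≥ 2 that is not isomorphic to the path P₃ on three vertices, then Ψ⁻_g(G) ≥ n/2, i.e., 2·Ψ⁻_g(G) ≥ n. -/

import Mathlib

namespace EnclavelessGame

variable {V : Type*} [Fintype V] [DecidableEq V]

/-- `v` is an enclave of `S` if `v ∈ S` and its closed neighborhood `N[v]` is contained in `S`. -/
def IsEnclave (G : SimpleGraph V) (S : Finset V) (v : V) : Prop :=
  v ∈ S ∧ ∀ u, G.Adj v u → u ∈ S

/-- `S` is enclaveless if it contains no enclave. -/
def IsEnclaveless (G : SimpleGraph V) (S : Finset V) : Prop :=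
  ∀ v, ¬ IsEnclave G S v

instance (G : SimpleGraph V) [DecidableRel G.Adj] (S : Finset V) :
    Decidable (IsEnclaveless G S) := by
  unfold IsEnclaveless IsEnclave
  infer_instance

/-- `D` is a dominating set: every vertex lies in the closed neighborhood
of some vertex of `D`. -/
def IsDominating (G : SimpleGraph V) (D : Finset V) : Prop :=
  ∀ v, ∃ u ∈ D, u = v ∨ G.Adj u v

/-- `D` is a minimal dominating set (minimal with respect to set inclusion). -/
def IsMinimalDominating (G : SimpleGraph V) (D : Finset V) : Prop :=
  IsDominating G D ∧ ∀ D' ⊆ D, IsDominating G D' → D' = D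

/-- `S` is a maximal enclaveless set (maximal with respect to set inclusion). -/
def IsMaximalEnclaveless (G : SimpleGraph V) (S : Finset V) : Prop :=
  IsEnclaveless G S ∧ ∀ T, S ⊆ T → IsEnclaveless G T → T = S

/-- The domination number `γ(G)`: minimum cardinality of a dominating set. -/
noncomputable def domNum (G : SimpleGraph V) : ℕ :=
  sInf {k | ∃ D : Finset V, IsDominating G D ∧ D.card = k}

/-- The upper domination number `Γ(G)`: maximum cardinality of a minimal dominating set. -/
noncomputable def upperDomNum (G : SimpleGraph V) : ℕ :=
  sSup {k | ∃ D : Finset V, IsMinimalDominating G D ∧ D.card = k}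

/-- The enclaveless number `Ψ(G)`: maximum cardinality of an enclaveless set. -/
noncomputable def enclavelessNum (G : SimpleGraph V) : ℕ :=
  sSup {k | ∃ S : Finset V, IsEnclaveless G S ∧ S.card = k}

/-- The lower enclaveless number `ψ(G)`: minimum cardinality of a maximal enclaveless set. -/
noncomputable def lowerEnclavelessNum (G : SimpleGraph V) : ℕ :=
  sInf {k | ∃ S : Finset V, IsMaximalEnclaveless G S ∧ S.card = k}

/-- The set of playable vertices given the set `S` of already chosen vertices:
vertices `v ∉ S` such that `S ∪ {v}` is enclaveless. -/
def playableSet (G : SimpleGraph V) [DecidableRel G.Adj] (S : Finset V) : Finset V :=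
  Finset.univ.filter (fun v => v ∉ S ∧ IsEnclaveless G (insert v S))

/-- The value of the competition-enclaveless game from position `S`: `maxTurn = true`
means it is Maximizer's turn (this computes `MaxVal S`), and `maxTurn = false` means it
is Minimizer's turn (this computes `MinVal S`). If no vertex is playable the value is
`|S|`; otherwise it is the max (resp. min) over playable `v` of the value of
`S ∪ {v}` with the turn switched. -/
def gameVal (G : SimpleGraph V) [DecidableRel G.Adj] (maxTurn : Bool) (S : Finset V) : ℕ :=
  if h : (playableSet G S).Nonempty then
    if maxTurn then
      (playableSet G S).attach.sup' (by simpa using h)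
        (fun v => gameVal G false (insert v.1 S))
    else
      (playableSet G S).attach.inf' (by simpa using h)
        (fun v => gameVal G true (insert v.1 S))
  else S.card
termination_by Sᶜ.card
decreasing_by
  all_goals
    have hv := v.2
    simp only [playableSet, Finset.mem_filter] at hv
    rw [Finset.compl_insert]
    exact Finset.card_erase_lt_of_mem (Finset.mem_compl.mpr hv.2.1)

/-- The Maximizer-start enclaveless game number `Ψ⁺_g(G) = MaxVal ∅`. -/
def maxStartGameNum (G : SimpleGraph V) [DecidableRel G.Adj] : ℕ := gameVal G true ∅

/-- The Minimizer-start enclaveless game number `Ψ⁻_g(G) = MinVal ∅`. -/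
def minStartGameNum (G : SimpleGraph V) [DecidableRel G.Adj] : ℕ := gameVal G false ∅

/-- `G` is claw-free: it contains no induced `K_{1,3}`, i.e. no vertex has three
pairwise non-adjacent neighbors. -/
def ClawFree (G : SimpleGraph V) : Prop :=
  ¬ ∃ (v : V) (T : Finset V), T.card = 3 ∧ (∀ u ∈ T, G.Adj v u) ∧
      ∀ a ∈ T, ∀ b ∈ T, a ≠ b → ¬ G.Adj a b

/-!
Let `S` be a maximal enclaveless set in a connected claw-free graph. A vertex outside `S` either
has an external private neighbour in `S` or has all its neighbours in `S`. Fix a root `r` with at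
most one neighbour outside `S`. Sending each vertex of the first kind to a private neighbour and
each vertex of the second kind, other than `r`, one step towards `r` is injective: a collision at
`w`, together with the next vertex on the way from `w` to `r`, would be a claw. Rooting at a vertex
of `S` gives `n ≤ 2|S|`. If `S` contains no such root, then every vertex outside `S` has all its
neighbours in `S`, and rooting at one of them gives `n ≤ 2|S| + 1`. In case of equality the
independent set `Sᶜ` sends, by claw-freeness, at most `2|S| = 2|Sᶜ| - 2` edges to `S`, so it
contains two leaves of `G`; these have distinct neighbours unless `G` is `P₃`.

So either every way of finishing the game is good for Maximizer, or `G` has two leaves with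
distinct neighbours. In the second case, after Minimizer's first move the neighbour of one of
these leaves is still unplayed. If that leaf is unplayed too, Maximizer plays it; now the final set
contains a leaf, which is a valid root in `S`.
-/

lemma one_lt_card_filter_eq_one {ι : Type*} {s : Finset ι} {f : ι → ℕ}
    (hpos : ∀ i ∈ s, 0 < f i) (hsum : ∑ i ∈ s, f i + 2 ≤ 2 * s.card) :
    1 < (s.filter (f · = 1)).card := by
  have hle : ∑ _i ∈ s, 2 ≤ ∑ i ∈ s, (f i + if f i = 1 then 1 else 0) :=
    Finset.sum_le_sum fun i hi => by
      have := hpos i hi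
      split_ifs <;> omega
  rw [Finset.sum_add_distrib, ← Finset.card_filter, Finset.sum_const, smul_eq_mul] at hle
  omega

section ClawFreeGraphs

variable {α : Type*} {G : SimpleGraph α}

lemma exists_adj_dist_lt {r v : α} (hr : G.Reachable r v) (hne : r ≠ v) :
    ∃ w, G.Adj v w ∧ G.dist r w < G.dist r v := by
  obtain ⟨p, hp⟩ := hr.symm.exists_walk_length_eq_dist
  cases p with
  | nil => exact absurd rfl hne
  | @cons _ w _ hvw q =>
    refine ⟨w, hvw, ?_⟩
    rw [G.dist_comm (u := r) (v := v), ← hp, G.dist_comm]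
    exact Nat.lt_succ_of_le (SimpleGraph.dist_le q)

lemma ClawFree.card_le_two (hG : ClawFree G) {v : α} {T : Finset α}
    (hT : G.IsIndepSet T) (hv : ∀ u ∈ T, G.Adj v u) : T.card ≤ 2 := by
  by_contra! h
  obtain ⟨T', hT'T, hcard⟩ := Finset.exists_subset_card_eq h
  exact hG ⟨v, T', hcard, fun u hu => hv u (hT'T hu),
    fun a ha b hb hab => hT (hT'T ha) (hT'T hb) hab⟩

lemma ClawFree.adj_or_adj_or_adj (hG : ClawFree G) {v a b c : α}
    (ha : G.Adj v a) (hb : G.Adj v b) (hc : G.Adj v c)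
    (hab : a ≠ b) (hac : a ≠ c) (hbc : b ≠ c) : G.Adj a b ∨ G.Adj a c ∨ G.Adj b c := by
  classical
  by_contra! h
  have hindep : G.IsIndepSet ({a, b, c} : Finset α) := by
    simp [SimpleGraph.IsIndepSet, Set.pairwise_insert, G.adj_comm, h]
  have hle := hG.card_le_two (v := v) hindep (by simp [ha, hb, hc])
  rw [Finset.card_eq_three.mpr ⟨a, b, c, hab, hac, hbc, rfl⟩] at hle
  omega

lemma ClawFree.isClique_setOf_adj_dist_lt (hG : ClawFree G) {r w : α} (hne : r ≠ w) :
    G.IsClique {v | G.Adj w v ∧ G.dist r w < G.dist r v} := by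
  rintro a ⟨hwa, ha⟩ b ⟨hwb, hb⟩ hab
  have hrw : G.Reachable r w :=
    (SimpleGraph.Reachable.of_dist_ne_zero (Nat.ne_zero_of_lt ha)).trans hwa.symm.reachable
  obtain ⟨x, hwx, hx⟩ := exists_adj_dist_lt hrw hne
  have not_adj : ∀ v, G.dist r w < G.dist r v → ¬ G.Adj v x := fun v hv hvx => by
    have := hvx.symm.reachable.dist_triangle_right r
    rw [SimpleGraph.dist_eq_one_iff_adj.mpr hvx.symm] at this
    omega
  have ne_x : ∀ v, G.dist r w < G.dist r v → v ≠ x := by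
    rintro v hv rfl
    omega
  rcases hG.adj_or_adj_or_adj hwa hwb hwx hab (ne_x a ha) (ne_x b hb) with h | h | h
  · exact h
  · exact absurd h (not_adj a ha)
  · exact absurd h (not_adj b hb)

lemma ClawFree.sum_degree_le [G.LocallyFinite] (hG : ClawFree G) {S T : Finset α}
    (hT : G.IsIndepSet T) (hTS : ∀ v ∈ T, G.neighborSet v ⊆ S) :
    ∑ v ∈ T, G.degree v ≤ 2 * S.card := by
  classical
  calc ∑ v ∈ T, G.degree v
      ≤ ∑ v ∈ T, (S.bipartiteAbove G.Adj v).card := by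
        refine Finset.sum_le_sum fun v hv => Finset.card_le_card fun w hw => ?_
        rw [SimpleGraph.mem_neighborFinset] at hw
        exact Finset.mem_filter.mpr ⟨hTS v hv hw, hw⟩
    _ = ∑ w ∈ S, (T.bipartiteBelow G.Adj w).card :=
        Finset.sum_card_bipartiteAbove_eq_sum_card_bipartiteBelow _
    _ ≤ ∑ _w ∈ S, 2 := by
        refine Finset.sum_le_sum fun w _ => hG.card_le_two (v := w) ?_ ?_
        · exact hT.mono (Finset.coe_subset.mpr (Finset.filter_subset _ _))
        · exact fun u hu => (Finset.mem_filter.mp hu).2.symm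
    _ = 2 * S.card := by rw [Finset.sum_const, smul_eq_mul, mul_comm]

lemma ClawFree.neighborSet_eq_pair (hG : ClawFree G) {d d' u : α} (hne : d ≠ d')
    (hd : G.neighborSet d = {u}) (hd' : G.neighborSet d' = {u}) :
    G.neighborSet u = {d, d'} := by
  have adj_d : ∀ x, G.Adj d x ↔ x = u := fun x => by simp [← SimpleGraph.mem_neighborSet, hd]
  have adj_d' : ∀ x, G.Adj d' x ↔ x = u := fun x => by simp [← SimpleGraph.mem_neighborSet, hd']
  have hud : G.Adj u d := ((adj_d u).mpr rfl).symm
  have hud' : G.Adj u d' := ((adj_d' u).mpr rfl).symm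
  ext x
  simp only [SimpleGraph.mem_neighborSet, Set.mem_insert_iff, Set.mem_singleton_iff]
  refine ⟨fun hux => ?_, ?_⟩
  · by_contra! hx
    rcases hG.adj_or_adj_or_adj hud hud' hux hne hx.1.symm hx.2.symm with h | h | h
    · exact hud'.ne' ((adj_d _).mp h)
    · exact hux.ne' ((adj_d _).mp h)
    · exact hux.ne' ((adj_d' _).mp h)
  · rintro (rfl | rfl) <;> assumption

lemma nonempty_iso_pathGraph_three (hG : G.Connected) {d d' u : α} (hne : d ≠ d')
    (hd : G.neighborSet d = {u}) (hd' : G.neighborSet d' = {u})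
    (hu : G.neighborSet u = {d, d'}) : Nonempty (G ≃g SimpleGraph.pathGraph 3) := by
  have adj_d : ∀ x, G.Adj d x ↔ x = u := fun x => by simp [← SimpleGraph.mem_neighborSet, hd]
  have adj_d' : ∀ x, G.Adj d' x ↔ x = u := fun x => by simp [← SimpleGraph.mem_neighborSet, hd']
  have adj_u : ∀ x, G.Adj u x ↔ x = d ∨ x = d' := fun x => by
    simp [← SimpleGraph.mem_neighborSet, hu]
  have hdu : d ≠ u := ((adj_d u).mpr rfl).ne
  have hdu' : d' ≠ u := ((adj_d' u).mpr rfl).ne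
  have mem_path : ∀ x, x ∈ ({d, u, d'} : Set α) := by
    intro x
    by_contra hx
    obtain ⟨p⟩ := hG u x
    obtain ⟨e, -, hfst, hsnd⟩ := p.exists_boundary_dart {d, u, d'} (by simp) hx
    have hadj := e.adj
    rcases hfst with h | h | h <;> rw [h] at hadj
    · simp [(adj_d _).mp hadj] at hsnd
    · rcases (adj_u _).mp hadj with h | h <;> simp [h] at hsnd
    · simp [(adj_d' _).mp hadj] at hsnd
  have hbij : Function.Bijective ![d, u, d'] := by
    constructor
    · intro i j hij
      fin_cases i <;> fin_cases j <;> simp_all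
    · intro x
      rcases mem_path x with rfl | rfl | rfl
      exacts [⟨0, rfl⟩, ⟨1, rfl⟩, ⟨2, rfl⟩]
  refine ⟨SimpleGraph.Iso.symm ⟨Equiv.ofBijective _ hbij, fun {i j} => ?_⟩⟩
  fin_cases i <;> fin_cases j <;>
    simp [SimpleGraph.pathGraph_adj, adj_d, adj_d', adj_u, hdu, hdu', hne, hne.symm]

end ClawFreeGraphs

section EnclavelessSets

variable {α : Type*} {G : SimpleGraph α} {S T : Finset α}

/-- `w` is an external private neighbour of `v` with respect to the set `Sᶜ`: it lies outside
`Sᶜ`, and `v` is its only neighbour in `Sᶜ`. Here `S` is an enclaveless set, so that `Sᶜ` is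
dominating. -/
def IsExternalPrivateNeighbor (G : SimpleGraph α) (S : Finset α) (v w : α) : Prop :=
  w ∈ S ∧ G.neighborSet w \ S = {v}

lemma isEnclaveless_iff : IsEnclaveless G S ↔ ∀ v ∈ S, (G.neighborSet v \ S).Nonempty := by
  simp [IsEnclaveless, IsEnclave, Set.Nonempty]

lemma IsEnclaveless.mono (hT : IsEnclaveless G T) (hST : S ⊆ T) : IsEnclaveless G S :=
  fun v hv => hT v ⟨hST hv.1, fun u hu => hST (hv.2 u hu)⟩

lemma isEnclaveless_empty : IsEnclaveless G ∅ := by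
  simp [isEnclaveless_iff]

lemma isEnclaveless_singleton {v w : α} (h : G.Adj v w) : IsEnclaveless G {v} := by
  rw [isEnclaveless_iff]
  intro x hx
  obtain rfl := Finset.mem_singleton.mp hx
  exact ⟨w, h, by simpa using h.ne'⟩

lemma IsEnclaveless.insert_of_neighborSet_eq_singleton [DecidableEq α] (hS : IsEnclaveless G S)
    {e u : α} (he : G.neighborSet e = {u}) (hu : u ∉ S) : IsEnclaveless G (insert e S) := by
  have adj_e : ∀ x, G.Adj e x ↔ x = u := fun x => by simp [← SimpleGraph.mem_neighborSet, he]
  rintro x ⟨hx, hsub⟩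
  rcases Finset.mem_insert.mp hx with rfl | hxS
  · have hxu := (adj_e u).mpr rfl
    exact hu (Finset.mem_of_mem_insert_of_ne (hsub u hxu) hxu.ne')
  · refine hS x ⟨hxS, fun y hxy => Finset.mem_of_mem_insert_of_ne (hsub y hxy) ?_⟩
    rintro rfl
    exact hu ((adj_e x).mp hxy.symm ▸ hxS)

lemma IsMaximalEnclaveless.exists_isExternalPrivateNeighbor_or_neighborSet_subset
    (hS : IsMaximalEnclaveless G S) {v : α} (hv : v ∉ S) :
    (∃ w, IsExternalPrivateNeighbor G S v w) ∨ G.neighborSet v ⊆ S := by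
  classical
  have hins : ¬ IsEnclaveless G (insert v S) := fun h =>
    hv (Finset.insert_eq_self.mp (hS.2 _ (Finset.subset_insert v S) h))
  simp only [IsEnclaveless, not_forall, not_not] at hins
  obtain ⟨w, hw, hsub⟩ := hins
  rcases Finset.mem_insert.mp hw with rfl | hwS
  · exact .inr fun y hy => Finset.mem_of_mem_insert_of_ne (hsub y hy) (G.ne_of_adj hy).symm
  · refine .inl ⟨w, hwS, (isEnclaveless_iff.mp hS.1 w hwS).subset_singleton_iff.mp ?_⟩
    rintro y ⟨hwy, hyS⟩
    exact (Finset.mem_insert.mp (hsub y hwy)).resolve_right hyS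

lemma IsMaximalEnclaveless.card_compl_erase_le [Fintype α] [DecidableEq α]
    (hS : IsMaximalEnclaveless G S) (hconn : G.Connected) (hclaw : ClawFree G) {r : α}
    (hr : (G.neighborSet r \ S).Subsingleton) : (Sᶜ.erase r).card ≤ S.card := by
  refine Finset.card_le_card_of_forall_subsingleton
    (fun v w => G.Adj w v ∧ (IsExternalPrivateNeighbor G S v w ∨
      G.neighborSet v ⊆ S ∧ G.dist r w < G.dist r v)) ?_ ?_
  · intro v hv
    obtain ⟨hvr, hvS⟩ := Finset.mem_erase.mp hv
    rw [Finset.mem_compl] at hvS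
    rcases hS.exists_isExternalPrivateNeighbor_or_neighborSet_subset hvS with ⟨w, hw⟩ | hsub
    · exact ⟨w, hw.1, (hw.2.ge rfl).1, .inl hw⟩
    · obtain ⟨w, hvw, hlt⟩ := exists_adj_dist_lt (hconn r v) hvr.symm
      exact ⟨w, hsub hvw, hvw.symm, .inr ⟨hsub, hlt⟩⟩
  · rintro w - a ⟨haS, hwa, ha⟩ b ⟨hbS, hwb, hb⟩
    replace haS : a ∈ G.neighborSet w \ S := ⟨hwa, by simpa using Finset.mem_of_mem_erase haS⟩
    replace hbS : b ∈ G.neighborSet w \ S := ⟨hwb, by simpa using Finset.mem_of_mem_erase hbS⟩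
    rcases ha with ha | ⟨hsub, ha⟩
    · exact (ha.2.le hbS).symm
    rcases hb with hb | ⟨-, hb⟩
    · exact hb.2.le haS
    by_contra hab
    obtain rfl | hrw := eq_or_ne r w
    · exact hab (hr haS hbS)
    · exact hbS.2 (hsub (hclaw.isClique_setOf_adj_dist_lt hrw ⟨hwa, ha⟩ ⟨hwb, hb⟩ hab))

variable [Fintype α]

lemma IsMaximalEnclaveless.card_le_two_mul_card (hS : IsMaximalEnclaveless G S)
    (hconn : G.Connected) (hclaw : ClawFree G) {r : α} (hrS : r ∈ S)
    (hr : (G.neighborSet r \ S).Subsingleton) : Fintype.card α ≤ 2 * S.card := by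
  classical
  have hle := hS.card_compl_erase_le hconn hclaw hr
  rw [Finset.erase_eq_of_notMem (by simpa using hrS)] at hle
  have := S.card_add_card_compl
  omega

lemma IsMaximalEnclaveless.neighborSet_subset_of_two_mul_card_lt (hS : IsMaximalEnclaveless G S)
    (hconn : G.Connected) (hclaw : ClawFree G) (hlt : 2 * S.card < Fintype.card α)
    {v : α} (hv : v ∉ S) : G.neighborSet v ⊆ S := by
  refine (hS.exists_isExternalPrivateNeighbor_or_neighborSet_subset hv).resolve_left ?_
  rintro ⟨w, hwS, hw⟩
  exact hlt.not_ge (hS.card_le_two_mul_card hconn hclaw hwS (hw ▸ Set.subsingleton_singleton))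

lemma IsMaximalEnclaveless.card_le_two_mul_card_add_one (hS : IsMaximalEnclaveless G S)
    (hconn : G.Connected) (hclaw : ClawFree G) : Fintype.card α ≤ 2 * S.card + 1 := by
  classical
  by_contra! h
  have hcompl := S.card_add_card_compl
  obtain ⟨r, hr⟩ : Sᶜ.Nonempty := Finset.card_pos.mp (by omega)
  have hsub := hS.neighborSet_subset_of_two_mul_card_lt hconn hclaw (by omega)
    (Finset.mem_compl.mp hr)
  have hle := hS.card_compl_erase_le hconn hclaw (r := r)
    (by simp [Set.sdiff_eq_empty.mpr hsub])
  rw [Finset.card_erase_of_mem hr] at hle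
  omega

lemma IsMaximalEnclaveless.exists_two_leaves (hS : IsMaximalEnclaveless G S)
    (hconn : G.Connected) (hclaw : ClawFree G) (hn : 2 ≤ Fintype.card α)
    (hP3 : ¬ Nonempty (G ≃g SimpleGraph.pathGraph 3)) (hlt : 2 * S.card < Fintype.card α) :
    ∃ d d' u u', u ≠ u' ∧ G.neighborSet d = {u} ∧ G.neighborSet d' = {u'} := by
  classical
  have : Nontrivial α := Fintype.one_lt_card_iff_nontrivial.mp hn
  have hsub : ∀ v ∈ Sᶜ, G.neighborSet v ⊆ S := fun v hv =>
    hS.neighborSet_subset_of_two_mul_card_lt hconn hclaw hlt (Finset.mem_compl.mp hv)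
  have hindep : G.IsIndepSet (Sᶜ : Finset α) := fun a ha b hb _ hab =>
    Finset.mem_compl.mp hb (hsub a ha hab)
  have hcard : Sᶜ.card = S.card + 1 := by
    have := S.card_add_card_compl
    have := hS.card_le_two_mul_card_add_one hconn hclaw
    omega
  have hleaves : 1 < (Sᶜ.filter (G.degree · = 1)).card := by
    refine one_lt_card_filter_eq_one (fun v _ => hconn.preconnected.degree_pos_of_nontrivial v) ?_
    have := hclaw.sum_degree_le hindep hsub
    omega
  obtain ⟨d, hd, d', hd', hne⟩ := Finset.one_lt_card.mp hleaves
  have exists_support : ∀ v, G.degree v = 1 → ∃ u, G.neighborSet v = {u} := fun v hv => by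
    obtain ⟨u, hu⟩ := Finset.card_eq_one.mp hv
    exact ⟨u, by rw [← G.coe_neighborFinset, hu, Finset.coe_singleton]⟩
  obtain ⟨u, hu⟩ := exists_support d (Finset.mem_filter.mp hd).2
  obtain ⟨u', hu'⟩ := exists_support d' (Finset.mem_filter.mp hd').2
  refine ⟨d, d', u, u', ?_, hu, hu'⟩
  rintro rfl
  exact hP3 (nonempty_iso_pathGraph_three hconn hne hu hu'
    (hclaw.neighborSet_eq_pair hne hu hu'))

end EnclavelessSets

section Game

variable {G : SimpleGraph V} [DecidableRel G.Adj] {S : Finset V}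

lemma mem_playableSet {v : V} :
    v ∈ playableSet G S ↔ v ∉ S ∧ IsEnclaveless G (insert v S) := by
  simp [playableSet]

lemma IsEnclaveless.isMaximalEnclaveless_of_playableSet_eq_empty (hS : IsEnclaveless G S)
    (h : playableSet G S = ∅) : IsMaximalEnclaveless G S := by
  refine ⟨hS, fun T hST hT => Finset.Subset.antisymm (fun v hv => ?_) hST⟩
  by_contra hvS
  have hplay : v ∈ playableSet G S :=
    mem_playableSet.mpr ⟨hvS, hT.mono (Finset.insert_subset hv hST)⟩
  simp [h] at hplay

lemma gameVal_of_playableSet_eq_empty (h : playableSet G S = ∅) (b : Bool) :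
    gameVal G b S = S.card := by
  rw [gameVal, dif_neg (Finset.not_nonempty_iff_eq_empty.mpr h)]

lemma exists_mem_playableSet_gameVal_eq (h : (playableSet G S).Nonempty) (b : Bool) :
    ∃ v ∈ playableSet G S, gameVal G b S = gameVal G (!b) (insert v S) := by
  rw [gameVal, dif_pos h]
  cases b with
  | false =>
    obtain ⟨v, -, hv⟩ := Finset.exists_mem_eq_inf' (Finset.attach_nonempty_iff.mpr h)
      fun v => gameVal G true (insert v.1 S)
    exact ⟨v, v.2, hv⟩
  | true =>
    obtain ⟨v, -, hv⟩ := Finset.exists_mem_eq_sup' (Finset.attach_nonempty_iff.mpr h)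
      fun v => gameVal G false (insert v.1 S)
    exact ⟨v, v.2, hv⟩

lemma gameVal_false_insert_le_gameVal_true {v : V} (hv : v ∈ playableSet G S) :
    gameVal G false (insert v S) ≤ gameVal G true S := by
  rw [gameVal.eq_def G true S, dif_pos ⟨v, hv⟩, if_pos rfl]
  exact Finset.le_sup' (fun v : playableSet G S => gameVal G false (insert v.1 S))
    (Finset.mem_attach _ ⟨v, hv⟩)

theorem IsEnclaveless.exists_isMaximalEnclaveless_card_eq_gameVal (hS : IsEnclaveless G S)
    (b : Bool) : ∃ T, S ⊆ T ∧ IsMaximalEnclaveless G T ∧ T.card = gameVal G b S := by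
  induction hk : Sᶜ.card using Nat.strong_induction_on generalizing b S with
  | _ k ih =>
    obtain hempty | hne := (playableSet G S).eq_empty_or_nonempty
    · exact ⟨S, subset_rfl, hS.isMaximalEnclaveless_of_playableSet_eq_empty hempty,
        (gameVal_of_playableSet_eq_empty hempty b).symm⟩
    · obtain ⟨v, hv, hval⟩ := exists_mem_playableSet_gameVal_eq hne b
      obtain ⟨hvS, hins⟩ := mem_playableSet.mp hv
      have hlt : (insert v S)ᶜ.card < k := by
        rw [← hk, Finset.compl_insert]
        exact Finset.card_erase_lt_of_mem (Finset.mem_compl.mpr hvS)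
      obtain ⟨T, hST, hT, hcard⟩ := ih _ hlt hins (!b) rfl
      exact ⟨T, (Finset.subset_insert v S).trans hST, hT, hcard.trans hval.symm⟩

lemma card_le_two_mul_gameVal_of_leaf_mem (hconn : G.Connected) (hclaw : ClawFree G)
    (hS : IsEnclaveless G S) {e u : V} (he : G.neighborSet e = {u}) (heS : e ∈ S) (b : Bool) :
    Fintype.card V ≤ 2 * gameVal G b S := by
  obtain ⟨T, hST, hT, hval⟩ := hS.exists_isMaximalEnclaveless_card_eq_gameVal b
  rw [← hval]
  exact hT.card_le_two_mul_card hconn hclaw (hST heS)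
    (he ▸ Set.subsingleton_singleton.anti Set.sdiff_subset)

lemma card_le_two_mul_gameVal_true_of_leaf (hconn : G.Connected) (hclaw : ClawFree G)
    (hS : IsEnclaveless G S) {e u : V} (he : G.neighborSet e = {u}) (hu : u ∉ S) :
    Fintype.card V ≤ 2 * gameVal G true S := by
  by_cases heS : e ∈ S
  · exact card_le_two_mul_gameVal_of_leaf_mem hconn hclaw hS he heS true
  · have hins := hS.insert_of_neighborSet_eq_singleton he hu
    have hplay := gameVal_false_insert_le_gameVal_true (mem_playableSet.mpr ⟨heS, hins⟩)
    have := card_le_two_mul_gameVal_of_leaf_mem hconn hclaw hins he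
      (Finset.mem_insert_self e S) false
    omega

end Game

/-- If `G` is a connected claw-free finite simple graph of order `n ≥ 2` that is not
isomorphic to the path `P₃` on three vertices, then `Ψ⁻_g(G) ≥ n/2`, i.e.
`2·Ψ⁻_g(G) ≥ n`. -/
theorem clawFree_minStartGameNum_ge {V : Type*} [Fintype V] [DecidableEq V]
    (G : SimpleGraph V) [DecidableRel G.Adj]
    (hconn : G.Connected) (hclaw : ClawFree G) (hn : 2 ≤ Fintype.card V)
    (hP3 : ¬ Nonempty (G ≃g SimpleGraph.pathGraph 3)) :
    Fintype.card V ≤ 2 * minStartGameNum G := by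
  by_cases hall : ∀ S, IsMaximalEnclaveless G S → Fintype.card V ≤ 2 * S.card
  · obtain ⟨S, -, hS, hval⟩ :=
      (isEnclaveless_empty (G := G)).exists_isMaximalEnclaveless_card_eq_gameVal false
    exact (hall S hS).trans_eq (congrArg (2 * ·) hval)
  push Not at hall
  obtain ⟨S, hS, hlt⟩ := hall
  obtain ⟨d, d', u, u', huu', hd, hd'⟩ := hS.exists_two_leaves hconn hclaw hn hP3 hlt
  have hfirst : (playableSet G ∅).Nonempty :=
    ⟨d, mem_playableSet.mpr ⟨by simp, isEnclaveless_singleton (hd.ge rfl)⟩⟩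
  obtain ⟨v, hv, hval⟩ := exists_mem_playableSet_gameVal_eq hfirst false
  have hvE : IsEnclaveless G {v} := (mem_playableSet.mp hv).2
  rw [minStartGameNum, hval]
  obtain rfl | huv := eq_or_ne u v
  · exact card_le_two_mul_gameVal_true_of_leaf hconn hclaw hvE hd' (by simpa using huu'.symm)
  · exact card_le_two_mul_gameVal_true_of_leaf hconn hclaw hvE hd (by simpa using huv)

end EnclavelessGame
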